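/- Let G be a simple graph on vertex set {1,…,n}, let M ∈ S(G), and let j be a vertex with M_{jj} ≠ 0. Let H be the simple graph on {1,…,n+1} obtained from G by cloning j with an edge, i.e., the new vertex n+1 is adjacent in H to j and to every neighbor of j in G, and all adjacencies among {1,…,n} are as in G. Then there exists a matrix N ∈ S(H) whose characteristic polynomial equals X times the characteristic polynomial of M; in particular N has the same nonzero eigenvalues as M with the same multiplicities, and the multiplicity of the eigenvalue 0 increases by one. -/

import Mathlib

/-!
Put `p i = i` on the old vertices and `p (n+1) = j`, and split the weight of the basis vector
`e_j` over `j` and its clone as `(3/5, 4/5)`, a unit vector with nonzero entries. The resulting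
`(n+1) × n` matrix `U` has orthonormal columns, so `N = U M Uᵀ` has the characteristic polynomial
of `M Uᵀ U = M` times `X` (rectangular `charpoly (A B)` versus `charpoly (B A)`). Entrywise, `N a b`
is a nonzero multiple of `M (p a) (p b)`, which is the pattern of `H`; the edge between `j` and its
clone comes from `M j j ≠ 0`.
-/

open Polynomial Matrix

/-- `M ∈ S(G)`: real symmetric matrix whose off-diagonal nonzero pattern is
given exactly by the adjacency of `G`. -/
def inS {V : Type*} (G : SimpleGraph V) (M : Matrix V V ℝ) : Prop :=
  M.IsSymm ∧ ∀ i j : V, i ≠ j → (M i j ≠ 0 ↔ G.Adj i j)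

/-- The map sending the clone `Fin.last n` to `j` and fixing every old vertex. -/
def cloneProj {n : ℕ} (j : Fin n) : Fin (n + 1) → Fin n :=
  Fin.lastCases j id

/-- The weights: `3/5` at `j`, `4/5` at its clone and `1` at every other vertex. -/
noncomputable def cloneWeight {n : ℕ} (j : Fin n) : Fin (n + 1) → ℝ :=
  Fin.lastCases (4 / 5) (fun i => if i = j then 3 / 5 else 1)

/-- The `(n+1) × n` matrix whose row `a` is `cloneWeight j a` times the basis vector
`e_(cloneProj j a)`. -/
noncomputable def cloneIsometry {n : ℕ} (j : Fin n) : Matrix (Fin (n + 1)) (Fin n) ℝ :=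
  Matrix.of fun a k => if cloneProj j a = k then cloneWeight j a else 0

lemma cloneWeight_ne_zero {n : ℕ} (j : Fin n) (a : Fin (n + 1)) : cloneWeight j a ≠ 0 := by
  induction a using Fin.lastCases with
  | last => norm_num [cloneWeight]
  | cast i =>
    simp only [cloneWeight, Fin.lastCases_castSucc]
    split_ifs <;> norm_num

/-- The columns are orthonormal because `(3/5)² + (4/5)² = 1`. -/
lemma cloneIsometry_transpose_mul {n : ℕ} (j : Fin n) :
    (cloneIsometry j)ᵀ * cloneIsometry j = 1 := by
  ext k l
  simp only [Matrix.mul_apply, Matrix.transpose_apply, cloneIsometry, Matrix.of_apply,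
    Fin.sum_univ_castSucc, cloneProj, cloneWeight, Fin.lastCases_castSucc, Fin.lastCases_last, id,
    Matrix.one_apply, ite_mul, zero_mul, Finset.sum_ite_eq', Finset.mem_univ, if_true]
  by_cases hkl : k = l
  · subst hkl
    by_cases hk : k = j
    · subst hk; norm_num
    · simp [hk, Ne.symm hk]
  · by_cases hk : j = k
    · subst hk; simp [hkl]
    · simp [hkl, hk]

lemma cloneIsometry_conj_apply {n : ℕ} (j : Fin n) (M : Matrix (Fin n) (Fin n) ℝ)
    (a b : Fin (n + 1)) :
    (cloneIsometry j * M * (cloneIsometry j)ᵀ) a b =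
      cloneWeight j a * M (cloneProj j a) (cloneProj j b) * cloneWeight j b := by
  simp [Matrix.mul_apply, cloneIsometry]

theorem clone_with_edge {n : ℕ} (G : SimpleGraph (Fin n))
    (M : Matrix (Fin n) (Fin n) ℝ) (hM : inS G M) (j : Fin n) (hjj : M j j ≠ 0)
    (H : SimpleGraph (Fin (n + 1)))
    (hold : ∀ i k : Fin n, H.Adj i.castSucc k.castSucc ↔ G.Adj i k)
    (hnew : ∀ i : Fin n, H.Adj (Fin.last n) i.castSucc ↔ (G.Adj j i ∨ i = j)) :
    ∃ N : Matrix (Fin (n + 1)) (Fin (n + 1)) ℝ,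
      inS H N ∧ N.charpoly = X * M.charpoly := by
  obtain ⟨hsymm, hadj⟩ := hM
  have hlast : ∀ i : Fin n, M j i ≠ 0 ↔ H.Adj (Fin.last n) i.castSucc := by
    intro i
    rw [hnew]
    by_cases h : i = j
    · subst h; simp [hjj]
    · simp [h, ← hadj j i (Ne.symm h)]
  refine ⟨cloneIsometry j * M * (cloneIsometry j)ᵀ, ⟨?_, ?_⟩, ?_⟩
  · ext a b
    rw [Matrix.transpose_apply, cloneIsometry_conj_apply, cloneIsometry_conj_apply,
      hsymm.apply (cloneProj j a) (cloneProj j b)]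
    ring
  · intro a b hab
    rw [cloneIsometry_conj_apply, mul_ne_zero_iff, mul_ne_zero_iff]
    simp only [ne_eq, cloneWeight_ne_zero, not_false_eq_true, true_and, and_true]
    induction a using Fin.lastCases with
    | last =>
      induction b using Fin.lastCases with
      | last => exact absurd rfl hab
      | cast k => simpa [cloneProj] using hlast k
    | cast i =>
      induction b using Fin.lastCases with
      | last => simpa [cloneProj, hsymm.apply j i, H.adj_comm i.castSucc] using hlast i
      | cast k =>
        have hik : i ≠ k := fun h => hab (congrArg _ h)
        simpa [cloneProj, hold] using hadj i k hik
  · rw [Matrix.mul_assoc,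
      Matrix.charpoly_mul_comm_of_le (cloneIsometry j) (M * (cloneIsometry j)ᵀ) (by simp),
      Matrix.mul_assoc, cloneIsometry_transpose_mul, Matrix.mul_one]
    simp
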